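/- Assume α = β (the sieved ultraspherical case). For every integer n ≥ 1, the function 𝒫_n(z) = ψ_{2n}(z;N) + (1 + a_{2n−1}(N))·ψ_{2n−1}(z;N) satisfies, for all z ∈ ℂ with z ≠ 0 and z^{2N} ≠ 1, the eigenvalue equation z²·𝒫_n″(z) + C(z)·𝒫_n′(z) + Σ_{k=0}^{N−1} B_k(z)·(𝒫_n(q^k/z) − 𝒫_n(z)) = n·(n + (2α+1)N)·𝒫_n(z), where B_k(z) = 2(2α+1)q^k z²/(q^k − z²)² and C(z) = z·(1 + N(2α+1) + 2N(2α+1)/(z^{2N} − 1)). -/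

import Mathlib

open Finset

/-- Monic OPUC associated to a sequence of (real) Verblunsky parameters. -/
noncomputable def Phi (c : ℕ → ℝ) : ℕ → ℂ → ℂ
  | 0, _ => 1
  | n + 1, z => z * Phi c n z - (c n : ℂ) * z ^ n * Phi c n z⁻¹

/-- CMV Laurent polynomials: ψ_{2m} z = z^m Φ_{2m}(1/z), ψ_{2m+1} z = z^{-m} Φ_{2m+1}(z). -/
noncomputable def psi (c : ℕ → ℝ) (n : ℕ) (z : ℂ) : ℂ :=
  if Even n then z ^ (n / 2) * Phi c n z⁻¹
  else z ^ (-((n / 2 : ℕ) : ℤ)) * Phi c n z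

/-- Verblunsky parameters of the Jacobi OPUC. -/
noncomputable def jacobiA (α β : ℝ) (n : ℕ) : ℝ :=
  -(α + 1 / 2 + (-1 : ℝ) ^ (n + 1) * (β + 1 / 2)) / (n + α + β + 2)

/-- Sieved Verblunsky parameters: a_n(N) = a_{k-1} if n = N k - 1 (k ≥ 1), 0 otherwise. -/
noncomputable def sievedA (α β : ℝ) (N n : ℕ) : ℝ :=
  if N ∣ (n + 1) then jacobiA α β ((n + 1) / N - 1) else 0

/-- The primitive N-th root of unity q = exp(2πi/N). -/
noncomputable def qN (N : ℕ) : ℂ := Complex.exp (2 * Real.pi * Complex.I / N)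

/-- The coefficients A_k(z;N) of the Dunkl-type operator L(N). -/
noncomputable def Acoef (α β : ℝ) (N k : ℕ) (z : ℂ) : ℂ :=
  if Even N then
    ((α : ℂ) + β + 1 + (-1 : ℂ) ^ k * ((α : ℂ) - β)) * z ^ 2 / (qN N ^ k - z ^ 2)
  else
    (((α : ℂ) + β + 1) * z ^ 2 +
        (if Even k then qN N ^ ((k : ℤ) / 2) else qN N ^ (((k : ℤ) - (N : ℤ)) / 2)) *
          ((α : ℂ) - β) * z) /
      (qN N ^ k - z ^ 2)

/-- B(z) = N((α+β+1) z^{2N} + (α-β) z^N)/(z^{2N} - 1). -/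
noncomputable def Bfun (α β : ℝ) (N : ℕ) (z : ℂ) : ℂ :=
  (N : ℂ) * (((α : ℂ) + β + 1) * z ^ (2 * N) + ((α : ℂ) - β) * z ^ N) / (z ^ (2 * N) - 1)

/-- The Dunkl-type operator L(N). -/
noncomputable def Lop (α β : ℝ) (N : ℕ) (f : ℂ → ℂ) : ℂ → ℂ := fun z =>
  z * deriv f z + ∑ k ∈ Finset.range N, Acoef α β N k z * (f (qN N ^ k / z) - f z)

/-- A function ℂ∖{0} → ℂ is a Laurent polynomial. -/
def IsLaurentPoly (f : ℂ → ℂ) : Prop :=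
  ∃ (m : ℕ) (p : Polynomial ℂ), ∀ z : ℂ, z ≠ 0 → f z = Polynomial.eval z p / z ^ m

/-- Sieved Jacobi polynomial of the first kind, as a function of z (x = z + 1/z). -/
noncomputable def sievP (α β : ℝ) (N n : ℕ) (z : ℂ) : ℂ :=
  psi (sievedA α β N) (2 * n) z
    + (1 + (sievedA α β N (2 * n - 1) : ℂ)) * psi (sievedA α β N) (2 * n - 1) z

/-- χ_n(z) = (z - 1/z) Q_{n-1}(x(z)), with Q the sieved Jacobi polynomial of 2nd kind. -/
noncomputable def sievChi (α β : ℝ) (N n : ℕ) (z : ℂ) : ℂ :=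
  -psi (sievedA α β N) (2 * n) z
    + (1 - (sievedA α β N (2 * n - 1) : ℂ)) * psi (sievedA α β N) (2 * n - 1) z

/-- reduced Szegő recursion -/
noncomputable def UU (g : ℂ) : ℕ → ℂ → ℂ
  | 0, _ => 1
  | m + 1, w => w * UU g m w + g / (2 * ((m : ℂ) + 1) + g) * w⁻¹ * UU g m w⁻¹

noncomputable def AA (g : ℂ) (m : ℕ) (w : ℂ) : ℂ :=
  m * UU g m w - g * (UU g m w - UU g m w⁻¹) / (w ^ 2 - 1)

noncomputable def BB (g : ℂ) (m : ℕ) (w : ℂ) : ℂ :=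
  -m * UU g m w⁻¹ + g * (UU g m w - UU g m w⁻¹) * w ^ 2 / (w ^ 2 - 1)

lemma UU_deriv (g : ℂ) (hg : ∀ m : ℕ, 2 * ((m : ℂ) + 1) + g ≠ 0) (m : ℕ) :
    ∀ w : ℂ, w ≠ 0 → w ^ 2 - 1 ≠ 0 →
      HasDerivAt (UU g m) (AA g m w / w) w ∧
      HasDerivAt (fun w => UU g m w⁻¹) (BB g m w / w) w := by
  induction m with
  | zero =>
    intro w hw hw2
    constructor
    · have : UU g 0 = fun _ => 1 := by funext w; rfl
      simpa [this, AA] using hasDerivAt_const w (1 : ℂ)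
    · have : UU g 0 = fun _ => 1 := by funext w; rfl
      simpa [this, BB] using hasDerivAt_const w (1 : ℂ)
  | succ m ih =>
    intro w hw hw2
    obtain ⟨h1, h2⟩ := ih w hw hw2
    have hi := hasDerivAt_inv hw
    have hid := hasDerivAt_id w
    have hgm := hg m
    constructor
    · have e : UU g (m + 1) = fun w => w * UU g m w +
          g / (2 * ((m : ℂ) + 1) + g) * w⁻¹ * UU g m w⁻¹ := by
        funext w; rfl
      have h := (hid.mul h1).add ((hi.const_mul (g / (2 * ((m : ℂ) + 1) + g))).mul h2)
      rw [e]
      refine HasDerivAt.congr_deriv h ?_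
      simp only [AA, BB, UU, id, inv_inv]
      generalize UU g m w = U
      generalize UU g m w⁻¹ = V
      push_cast
      field_simp
      ring
    · have e : (fun w => UU g (m + 1) w⁻¹) = fun w => w⁻¹ * UU g m w⁻¹ +
          g / (2 * ((m : ℂ) + 1) + g) * w * UU g m w := by
        funext w; simp [UU]
      have h := (hi.mul h2).add ((hid.const_mul (g / (2 * ((m : ℂ) + 1) + g))).mul h1)
      rw [e]
      refine HasDerivAt.congr_deriv h ?_
      simp only [AA, BB, UU, id, inv_inv]
      generalize UU g m w = U
      generalize UU g m w⁻¹ = V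
      push_cast
      field_simp
      ring

lemma AA_deriv (g : ℂ) (hg : ∀ m : ℕ, 2 * ((m : ℂ) + 1) + g ≠ 0) (m : ℕ)
    (w : ℂ) (hw : w ≠ 0) (hw2 : w ^ 2 - 1 ≠ 0) :
    HasDerivAt (AA g m) ((m * AA g m w - g * (AA g m w - BB g m w) / (w ^ 2 - 1)
        + 2 * g * w ^ 2 * (UU g m w - UU g m w⁻¹) / (w ^ 2 - 1) ^ 2) / w) w ∧
    HasDerivAt (BB g m) ((-m * BB g m w + g * (AA g m w - BB g m w) * w ^ 2 / (w ^ 2 - 1)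
        - 2 * g * w ^ 2 * (UU g m w - UU g m w⁻¹) / (w ^ 2 - 1) ^ 2) / w) w := by
  obtain ⟨h1, h2⟩ := UU_deriv g hg m w hw hw2
  have hp := hasDerivAt_pow 2 w
  have hq := hp.sub_const 1
  constructor
  · have h := (h1.const_mul (m : ℂ)).sub (((h1.sub h2).const_mul g).div hq hw2)
    refine HasDerivAt.congr_deriv h ?_
    generalize AA g m w = A
    generalize BB g m w = B
    simp only [Pi.sub_apply]
    generalize UU g m w = U
    generalize UU g m w⁻¹ = V
    field_simp
    ring
  · have h := (h2.const_mul (-m : ℂ)).add ((((h1.sub h2).const_mul g).mul hp).div hq hw2)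
    refine HasDerivAt.congr_deriv h ?_
    generalize AA g m w = A
    generalize BB g m w = B
    simp only [Pi.sub_apply, Pi.mul_apply]
    generalize UU g m w = U
    generalize UU g m w⁻¹ = V
    field_simp
    ring

lemma comp_deriv (N : ℕ) (hN : 1 ≤ N) (j : ℤ) (f : ℂ → ℂ) (A z : ℂ) (hz : z ≠ 0)
    (h : HasDerivAt f (A / z ^ N) (z ^ N)) :
    HasDerivAt (fun z => z ^ j * f (z ^ N)) (z ^ j * (j * f (z ^ N) + N * A) / z) z := by
  have h1 := hasDerivAt_zpow j z (Or.inl hz)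
  have h2 := h.comp z (hasDerivAt_pow N z)
  refine HasDerivAt.congr_deriv (h1.mul h2) ?_
  obtain ⟨M, rfl⟩ : ∃ M, N = M + 1 := ⟨N - 1, by omega⟩
  rw [zpow_sub_one₀ hz]
  simp only [Nat.add_sub_cancel]
  generalize f (z ^ (M + 1)) = F
  rw [pow_succ]
  field_simp

lemma zpow_sum_aux (N : ℕ) (x : ℂ) (hx : x ≠ 1) (hxN : x ^ N ≠ 1) :
    x / (1 - x) ^ 2 = ∑ r ∈ Finset.range N,
      ((r : ℂ) / (1 - x ^ N) + N * x ^ N / (1 - x ^ N) ^ 2) * x ^ r := by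
  have key : ∀ M : ℕ, (1 - x) ^ 2 * ∑ r ∈ Finset.range M, (r : ℂ) * x ^ r =
      x - M * x ^ M + (M - 1) * x ^ (M + 1) := by
    intro M
    induction M with
    | zero => simp
    | succ M ih => rw [Finset.sum_range_succ, mul_add, ih]; push_cast; ring
  have h0 : (1 - x) ≠ 0 := sub_ne_zero.mpr hx.symm
  have h1 : 1 - x ^ N ≠ 0 := sub_ne_zero.mpr hxN.symm
  have hgeo := mul_neg_geom_sum x N
  have hk := key N
  have : ∑ r ∈ Finset.range N,
      ((r : ℂ) / (1 - x ^ N) + N * x ^ N / (1 - x ^ N) ^ 2) * x ^ r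
      = (∑ r ∈ Finset.range N, (r : ℂ) * x ^ r) / (1 - x ^ N)
        + N * x ^ N / (1 - x ^ N) ^ 2 * ∑ r ∈ Finset.range N, x ^ r := by
    rw [Finset.sum_div, Finset.mul_sum, ← Finset.sum_add_distrib]
    refine Finset.sum_congr rfl fun r _ => ?_
    ring
  rw [this]
  have e1 : ∑ r ∈ Finset.range N, x ^ r = (1 - x ^ N) / (1 - x) := by
    rw [eq_div_iff h0, mul_comm]; exact hgeo
  have e2 : ∑ r ∈ Finset.range N, (r : ℂ) * x ^ r
      = (x - N * x ^ N + (N - 1) * x ^ (N + 1)) / (1 - x) ^ 2 := by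
    rw [eq_div_iff (pow_ne_zero 2 h0), mul_comm]; exact hk
  rw [e1, e2, pow_succ x N]
  generalize x ^ N = X at *
  field_simp
  ring

lemma qN_prim (N : ℕ) (hN : 1 ≤ N) : IsPrimitiveRoot (qN N) N :=
  Complex.isPrimitiveRoot_exp N (by omega)

lemma orth (N : ℕ) (hN : 1 ≤ N) (j r : ℕ) (hj : j < N) (hr : r < N) :
    ∑ k ∈ Finset.range N, (qN N ^ k) ^ j * ((qN N ^ k)⁻¹) ^ r = if r = j then (N : ℂ) else 0 := by
  have hp := qN_prim N hN
  have hq : qN N ≠ 0 := hp.ne_zero (by omega)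
  have e : ∀ k, (qN N ^ k) ^ j * ((qN N ^ k)⁻¹) ^ r = (qN N ^ j * (qN N ^ r)⁻¹) ^ k := by
    intro k
    rw [mul_pow, inv_pow, inv_pow, ← pow_mul, ← pow_mul, ← pow_mul, ← pow_mul, mul_comm k j,
      mul_comm k r]
  simp_rw [e]
  split_ifs with h
  · subst h
    rw [mul_inv_cancel₀ (pow_ne_zero _ hq)]; simp
  · have hne : qN N ^ j * (qN N ^ r)⁻¹ ≠ 1 := by
      intro h'
      rw [mul_inv_eq_one₀ (pow_ne_zero _ hq)] at h'
      exact h (hp.pow_inj hj hr h').symm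
    have h1 := mul_neg_geom_sum (qN N ^ j * (qN N ^ r)⁻¹) N
    have h2 : (qN N ^ j * (qN N ^ r)⁻¹) ^ N = 1 := by
      rw [mul_pow, inv_pow, ← pow_mul, ← pow_mul, mul_comm j, mul_comm r, pow_mul, pow_mul,
        hp.pow_eq_one]; simp
    rw [h2, sub_self] at h1
    exact (mul_eq_zero.mp h1).resolve_left (sub_ne_zero.mpr hne.symm)

lemma qsum_lt (N : ℕ) (hN : 1 ≤ N) (j : ℕ) (hj : j < N) (t : ℂ) (ht : t ^ N ≠ 1) :
    ∑ k ∈ Finset.range N, qN N ^ k * t / (qN N ^ k - t) ^ 2 * (qN N ^ k) ^ j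
      = N * (j * t ^ j / (1 - t ^ N) + N * t ^ j * t ^ N / (1 - t ^ N) ^ 2) := by
  have hp := qN_prim N hN
  have hq : qN N ≠ 0 := hp.ne_zero (by omega)
  have e : ∀ k, qN N ^ k * t / (qN N ^ k - t) ^ 2 * (qN N ^ k) ^ j
      = ∑ r ∈ Finset.range N, (((r : ℂ) / (1 - t ^ N) + N * t ^ N / (1 - t ^ N) ^ 2) * t ^ r)
          * ((qN N ^ k) ^ j * ((qN N ^ k)⁻¹) ^ r) := by
    intro k
    have hqk : qN N ^ k ≠ 0 := pow_ne_zero _ hq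
    have hxN : (t * (qN N ^ k)⁻¹) ^ N = t ^ N := by
      rw [mul_pow, inv_pow, ← pow_mul, mul_comm k, pow_mul, hp.pow_eq_one]; simp
    have hx1 : t * (qN N ^ k)⁻¹ ≠ 1 := by
      intro h; rw [h, one_pow] at hxN; exact ht hxN.symm
    have h := zpow_sum_aux N (t * (qN N ^ k)⁻¹) hx1 (by rwa [hxN])
    rw [hxN] at h
    have e1 : qN N ^ k * t / (qN N ^ k - t) ^ 2
        = t * (qN N ^ k)⁻¹ / (1 - t * (qN N ^ k)⁻¹) ^ 2 := by
      have h3 : 1 - t * (qN N ^ k)⁻¹ = (qN N ^ k - t) * (qN N ^ k)⁻¹ := by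
        field_simp
      rw [h3]
      have h4 : qN N ^ k - t ≠ 0 := by
        intro h'; apply hx1
        rw [← sub_eq_zero.mp h', mul_inv_cancel₀ hqk]
      field_simp
    rw [e1, h, Finset.sum_mul]
    refine Finset.sum_congr rfl fun r _ => ?_
    rw [mul_pow]; ring
  simp_rw [e]
  rw [Finset.sum_comm]
  simp_rw [← Finset.mul_sum]
  rw [Finset.sum_congr rfl fun r hr => by
    rw [orth N hN j r hj (Finset.mem_range.mp hr)]]
  simp only [mul_ite, mul_zero, Finset.sum_ite_eq', Finset.mem_range, hj, if_true]
  ring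

lemma qsum (N : ℕ) (hN : 1 ≤ N) (j : ℕ) (hj : j ≤ N) (t : ℂ) (ht : t ^ N ≠ 1) :
    ∑ k ∈ Finset.range N, qN N ^ k * t / (qN N ^ k - t) ^ 2 * (qN N ^ k) ^ j
      = N * (j * t ^ j / (1 - t ^ N) + N * t ^ j * t ^ N / (1 - t ^ N) ^ 2) := by
  rcases hj.lt_or_eq with h | h
  · exact qsum_lt N hN j h t ht
  · rw [h]
    have h0 := qsum_lt N hN 0 (by omega) t ht
    have : ∀ k, (qN N ^ k) ^ N = (qN N ^ k) ^ 0 := by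
      intro k
      rw [← pow_mul, mul_comm, pow_mul, (qN_prim N hN).pow_eq_one]; simp
    simp_rw [this]
    rw [h0]
    have h1 : 1 - t ^ N ≠ 0 := sub_ne_zero.mpr ht.symm
    generalize t ^ N = T at *
    simp only [Nat.cast_zero, zero_div, zero_add, pow_zero, mul_one]
    field_simp
    ring

lemma sA_even (α : ℝ) (N n : ℕ) : sievedA α α N (2 * n) = 0 := by
  unfold sievedA
  split_ifs with h
  · obtain ⟨k, hk⟩ := h
    have hN : 0 < N := by rcases Nat.eq_zero_or_pos N with h | h <;> [simp [h] at hk; exact h]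
    rw [hk, Nat.mul_div_cancel_left _ hN]
    have hkodd : Odd k := by
      have : Odd (N * k) := ⟨n, hk.symm⟩
      exact (Nat.odd_mul.mp this).2
    obtain ⟨l, rfl⟩ := hkodd
    simp only [jacobiA, Nat.add_sub_cancel]
    simp [pow_add, pow_mul]
  · rfl

lemma sA_ndvd (α : ℝ) (N n : ℕ) (hN : 1 ≤ N) (h : ¬ N ∣ n + 1) :
    sievedA α α N (2 * n + 1) = 0 := by
  unfold sievedA
  split_ifs with h1
  · obtain ⟨k, hk⟩ := h1
    rw [hk, Nat.mul_div_cancel_left _ hN]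
    have hkodd : Odd k := by
      rw [← Nat.not_even_iff_odd]
      rintro ⟨l, rfl⟩
      exact h ⟨l, by linarith⟩
    obtain ⟨l, rfl⟩ := hkodd
    simp only [jacobiA, Nat.add_sub_cancel]
    simp [pow_add, pow_mul]
  · rfl

lemma sA_dvd (α : ℝ) (N n m : ℕ) (hN : 1 ≤ N) (h : n + 1 = N * (m + 1)) :
    sievedA α α N (2 * n + 1) = -((2 * α + 1) / (2 * ((m : ℝ) + 1) + (2 * α + 1))) := by
  unfold sievedA
  have hk : 2 * n + 1 + 1 = N * (2 * m + 1 + 1) := by linarith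
  rw [if_pos ⟨_, hk⟩, hk, Nat.mul_div_cancel_left _ hN]
  simp only [jacobiA, Nat.add_sub_cancel]
  rw [show (-1 : ℝ) ^ (2 * m + 1 + 1) = 1 by simp [pow_add, pow_mul]]
  push_cast
  rw [neg_div]
  congr 2 <;> ring

lemma Phi_two (α : ℝ) (N n : ℕ) (z : ℂ) (hz : z ≠ 0) :
    Phi (sievedA α α N) (2 * (n + 1)) z = z ^ 2 * Phi (sievedA α α N) (2 * n) z
      - (sievedA α α N (2 * n + 1) : ℂ) * z ^ (2 * n) * Phi (sievedA α α N) (2 * n) z⁻¹ := by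
  rw [show 2 * (n + 1) = 2 * n + 1 + 1 by ring]
  simp only [Phi, sA_even]
  rw [pow_succ z (2 * n)]
  push_cast
  field_simp
  ring

lemma Phi_eq (α : ℝ) (N : ℕ) (hN : 1 ≤ N) (m : ℕ) : ∀ i, i < N → ∀ z : ℂ, z ≠ 0 →
    Phi (sievedA α α N) (2 * (N * m + i)) z
      = z ^ (N * m + i) * z ^ i * UU (2 * (α : ℂ) + 1) m (z ^ N) := by
  have step : ∀ m, (∀ z : ℂ, z ≠ 0 → Phi (sievedA α α N) (2 * (N * m + 0)) z
      = z ^ (N * m + 0) * z ^ 0 * UU (2 * (α : ℂ) + 1) m (z ^ N)) →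
      ∀ i, i < N → ∀ z : ℂ, z ≠ 0 →
    Phi (sievedA α α N) (2 * (N * m + i)) z
      = z ^ (N * m + i) * z ^ i * UU (2 * (α : ℂ) + 1) m (z ^ N) := by
    intro m h0 i
    induction i with
    | zero => intro _; exact h0
    | succ i ih =>
      intro hi z hz
      rw [← add_assoc, Phi_two _ _ _ _ hz, ih (by omega) z hz, sA_ndvd α N _ hN]
      · push_cast; ring
      · rw [add_assoc, Nat.dvd_add_right (dvd_mul_right N m)]
        exact Nat.not_dvd_of_pos_of_lt (by omega) hi
  apply step
  induction m with
  | zero => intro z hz; simp [Phi, UU]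
  | succ m ih =>
    intro z hz
    obtain ⟨M, rfl⟩ : ∃ M, N = M + 1 := ⟨N - 1, by omega⟩
    have e : (M + 1) * (m + 1) + 0 = ((M + 1) * m + M) + 1 := by ring
    rw [e, Phi_two _ _ _ _ hz, step m ih M (by omega) z hz,
      step m ih M (by omega) z⁻¹ (inv_ne_zero hz), sA_dvd α (M + 1) _ m hN (by ring)]
    simp only [UU, inv_pow]
    generalize UU (2 * (α : ℂ) + 1) m (z ^ (M + 1)) = U
    generalize UU (2 * (α : ℂ) + 1) m (z ^ (M + 1))⁻¹ = V
    push_cast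
    generalize (2 * (α : ℂ) + 1) / (2 * ((m : ℂ) + 1) + (2 * (α : ℂ) + 1)) = b
    have hM : z ^ M ≠ 0 := pow_ne_zero _ hz
    have hQ : z ^ ((M + 1) * m) ≠ 0 := pow_ne_zero _ hz
    rw [mul_comm 2 ((M + 1) * m + M), pow_mul]
    simp only [pow_succ, pow_add, pow_zero] at *
    generalize z ^ M = y at *
    generalize z ^ ((M + 1) * m) = Q at *
    field_simp
    ring

lemma sievP_eq (α : ℝ) (N : ℕ) (hN : 1 ≤ N) (m i : ℕ) (hi : i < N) (z : ℂ) (hz : z ≠ 0) :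
    sievP α α N (N * m + i + 1) z
      = z ^ ((i + 1 : ℕ) : ℤ) * UU (2 * (α : ℂ) + 1) m (z ^ N)
        + z ^ (-((i + 1 : ℕ) : ℤ)) * UU (2 * (α : ℂ) + 1) m (z ^ N)⁻¹ := by
  unfold sievP psi
  have e1 : 2 * (N * m + i + 1) - 1 = 2 * (N * m + i) + 1 := by omega
  have e2 : (2 * (N * m + i) + 1) / 2 = N * m + i := by omega
  have e3 : (2 * (N * m + i + 1)) / 2 = N * m + i + 1 := by omega
  rw [e1, if_pos (even_two_mul _), if_neg (by simp), e2, e3,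
    Phi_two _ _ _ _ (inv_ne_zero hz)]
  rw [show Phi (sievedA α α N) (2 * (N * m + i) + 1) z
    = z * Phi (sievedA α α N) (2 * (N * m + i)) z by simp [Phi, sA_even]]
  rw [inv_inv, Phi_eq α N hN m i hi z hz, Phi_eq α N hN m i hi _ (inv_ne_zero hz)]
  generalize (sievedA α α N (2 * (N * m + i) + 1) : ℂ) = b
  rw [inv_pow z N]
  generalize UU (2 * (α : ℂ) + 1) m (z ^ N) = U
  generalize UU (2 * (α : ℂ) + 1) m (z ^ N)⁻¹ = V
  simp only [zpow_neg, zpow_natCast]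
  rw [mul_comm 2 (N * m + i), pow_mul]
  have hM : z ^ i ≠ 0 := pow_ne_zero _ hz
  have hQ : z ^ (N * m) ≠ 0 := pow_ne_zero _ hz
  simp only [inv_pow, pow_succ, pow_add, pow_zero] at *
  generalize z ^ i = y at *
  generalize z ^ (N * m) = Q at *
  field_simp
  ring

/-- in the ultraspherical case α = β, the sieved ultraspherical polynomial
of the first kind 𝒫_n satisfies the explicit eigenvalue equation with eigenvalue
n(n + (2α+1)N). -/
theorem stmt_17 (α : ℝ) (hα : -1 < α) (N : ℕ) (hN : 1 ≤ N) (n : ℕ) (hn : 1 ≤ n)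
    (z : ℂ) (hz : z ≠ 0) (hz2 : z ^ (2 * N) ≠ 1) :
    z ^ 2 * deriv (deriv (sievP α α N n)) z
      + z * (1 + (N : ℂ) * (2 * (α : ℂ) + 1)
          + 2 * (N : ℂ) * (2 * (α : ℂ) + 1) / (z ^ (2 * N) - 1)) * deriv (sievP α α N n) z
      + ∑ k ∈ Finset.range N,
          2 * (2 * (α : ℂ) + 1) * qN N ^ k * z ^ 2 / (qN N ^ k - z ^ 2) ^ 2
            * (sievP α α N n (qN N ^ k / z) - sievP α α N n z)
      = (n : ℂ) * ((n : ℂ) + (2 * (α : ℂ) + 1) * N) * sievP α α N n z := by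
  obtain ⟨m, i, hi, rfl⟩ : ∃ m i, i < N ∧ n = N * m + i + 1 :=
    ⟨(n - 1) / N, (n - 1) % N, Nat.mod_lt _ hN, by
      have := Nat.div_add_mod (n - 1) N
      omega⟩
  have hg : ∀ m : ℕ, 2 * ((m : ℂ) + 1) + (2 * (α : ℂ) + 1) ≠ 0 := by
    intro m h
    have h' : 2 * ((m : ℝ) + 1) + (2 * α + 1) = 0 := by exact_mod_cast h
    have : (0 : ℝ) ≤ m := Nat.cast_nonneg m
    linarith
  have hPe := fun x hx => sievP_eq α N hN m i hi x hx
  generalize 2 * (α : ℂ) + 1 = g at hPe hg ⊢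
  generalize sievP α α N (N * m + i + 1) = P at hPe ⊢
  obtain ⟨j, hj⟩ : ∃ j, j = i + 1 := ⟨_, rfl⟩
  have hn' : ((N * m + i + 1 : ℕ) : ℂ) = N * m + j := by subst hj; push_cast; ring
  rw [hn']
  simp only [← hj] at hPe
  have hjN : j ≤ N := by omega
  clear hn hn' hj hi
  have hP1 : ∀ x : ℂ, x ≠ 0 → x ^ (2 * N) ≠ 1 → HasDerivAt P
      (x ^ (j : ℤ) * (((j : ℤ) : ℂ) * UU g m (x ^ N) + N * AA g m (x ^ N)) / x
        + x ^ (-(j : ℤ)) * (((-(j : ℤ) : ℤ) : ℂ) * UU g m (x ^ N)⁻¹ + N * BB g m (x ^ N)) / x) x := by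
    intro x hx hx2
    have hw : x ^ N ≠ 0 := pow_ne_zero _ hx
    have hw2 : (x ^ N) ^ 2 - 1 ≠ 0 := by
      rw [← pow_mul, mul_comm N 2]; exact sub_ne_zero.mpr hx2
    obtain ⟨h1, h2⟩ := UU_deriv g hg m _ hw hw2
    have h := (comp_deriv N hN j _ _ x hx h1).add (comp_deriv N hN (-j) _ _ x hx h2)
    refine h.congr_of_eventuallyEq ?_
    filter_upwards [isOpen_ne.mem_nhds hx] with y hy
    exact hPe y hy
  have hev : ∀ᶠ x in nhds z, x ≠ 0 ∧ x ^ (2 * N) ≠ 1 := by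
    have h0 : ∀ᶠ x in nhds z, x ≠ 0 := isOpen_ne.mem_nhds hz
    exact h0.and ((continuous_pow (2 * N)).continuousAt.eventually_ne hz2)
  have hw : z ^ N ≠ 0 := pow_ne_zero _ hz
  have hw2 : (z ^ N) ^ 2 - 1 ≠ 0 := by
    rw [← pow_mul, mul_comm N 2]; exact sub_ne_zero.mpr hz2
  obtain ⟨h1, h2⟩ := UU_deriv g hg m _ hw hw2
  obtain ⟨h3, h4⟩ := AA_deriv g hg m _ hw hw2
  obtain ⟨A', hA'⟩ : ∃ A', A' = (m * AA g m (z ^ N)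
      - g * (AA g m (z ^ N) - BB g m (z ^ N)) / ((z ^ N) ^ 2 - 1)
      + 2 * g * (z ^ N) ^ 2 * (UU g m (z ^ N) - UU g m (z ^ N)⁻¹) / ((z ^ N) ^ 2 - 1) ^ 2) :=
    ⟨_, rfl⟩
  obtain ⟨B', hB'⟩ : ∃ B', B' = (-m * BB g m (z ^ N)
      + g * (AA g m (z ^ N) - BB g m (z ^ N)) * (z ^ N) ^ 2 / ((z ^ N) ^ 2 - 1)
      - 2 * g * (z ^ N) ^ 2 * (UU g m (z ^ N) - UU g m (z ^ N)⁻¹) / ((z ^ N) ^ 2 - 1) ^ 2) :=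
    ⟨_, rfl⟩
  rw [← hA'] at h3
  rw [← hB'] at h4
  have e1 : HasDerivAt (fun w => ((j : ℤ) : ℂ) * UU g m w + N * AA g m w)
      ((((j : ℤ) : ℂ) * AA g m (z ^ N) + N * A') / z ^ N) (z ^ N) :=
    ((h1.const_mul ((j : ℤ) : ℂ)).add (h3.const_mul (N : ℂ))).congr_deriv
      (by rw [add_div, mul_div_assoc, mul_div_assoc])
  have e2 : HasDerivAt (fun w => ((-(j : ℤ) : ℤ) : ℂ) * UU g m w⁻¹ + N * BB g m w)
      ((((-(j : ℤ) : ℤ) : ℂ) * BB g m (z ^ N) + N * B') / z ^ N) (z ^ N) :=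
    ((h2.const_mul ((-(j : ℤ) : ℤ) : ℂ)).add (h4.const_mul (N : ℂ))).congr_deriv
      (by rw [add_div, mul_div_assoc, mul_div_assoc])
  have h := ((comp_deriv N hN j _ _ z hz e1).div (hasDerivAt_id z) hz).add
    ((comp_deriv N hN (-j) _ _ z hz e2).div (hasDerivAt_id z) hz)
  have hP2 := (h.congr_of_eventuallyEq (f₁ := deriv P) (by
    filter_upwards [hev] with x hx
    exact (hP1 x hx.1 hx.2).deriv)).deriv
  have hp := qN_prim N hN
  have hq : qN N ≠ 0 := hp.ne_zero (by omega)
  have hsum : ∑ k ∈ Finset.range N,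
          2 * g * qN N ^ k * z ^ 2 / (qN N ^ k - z ^ 2) ^ 2 * (P (qN N ^ k / z) - P z)
      = 2 * g * z ^ (-(j : ℤ)) * UU g m (z ^ N)⁻¹ *
          ∑ k ∈ Finset.range N, qN N ^ k * z ^ 2 / (qN N ^ k - z ^ 2) ^ 2 * (qN N ^ k) ^ j
        + 2 * g * z ^ (j : ℤ) * UU g m (z ^ N) *
          ∑ k ∈ Finset.range N, qN N ^ k * z ^ 2 / (qN N ^ k - z ^ 2) ^ 2 * (qN N ^ k) ^ (N - j)
        - 2 * g * P z *
          ∑ k ∈ Finset.range N, qN N ^ k * z ^ 2 / (qN N ^ k - z ^ 2) ^ 2 * (qN N ^ k) ^ 0 := by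
    rw [Finset.mul_sum, Finset.mul_sum, Finset.mul_sum, ← Finset.sum_add_distrib,
      ← Finset.sum_sub_distrib]
    refine Finset.sum_congr rfl fun k _ => ?_
    have hqk : qN N ^ k ≠ 0 := pow_ne_zero _ hq
    have hqN : (qN N ^ k) ^ N = 1 := by
      rw [← pow_mul, mul_comm, pow_mul, hp.pow_eq_one, one_pow]
    rw [hPe (qN N ^ k / z) (div_ne_zero hqk hz), div_pow, hqN, one_div, inv_inv, div_zpow,
      div_zpow]
    have e : (qN N ^ k) ^ (-(j : ℤ)) = (qN N ^ k) ^ (N - j) := by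
      rw [zpow_neg, zpow_natCast, eq_comm]
      apply eq_inv_of_mul_eq_one_left
      rw [← pow_add, Nat.sub_add_cancel hjN, hqN]
    rw [e]
    simp only [zpow_neg, zpow_natCast, pow_zero]
    rw [div_inv_eq_mul]
    ring
  have htN : (z ^ 2) ^ N ≠ 1 := by rwa [← pow_mul]
  rw [hsum, qsum N hN j hjN _ htN, qsum N hN (N - j) (by omega) _ htN, qsum N hN 0 (by omega) _ htN,
    hP2, (hP1 z hz hz2).deriv, hPe z hz]
  have hy : z ^ j ≠ 0 := pow_ne_zero _ hz
  have e4 : (z ^ 2) ^ (N - j) = (z ^ N) ^ 2 / (z ^ j) ^ 2 := by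
    rw [eq_div_iff (pow_ne_zero _ hy), ← pow_mul, ← pow_mul, ← pow_mul, ← pow_add]
    congr 1; omega
  have e5 : (z ^ 2) ^ j = (z ^ j) ^ 2 := by rw [← pow_mul, ← pow_mul, mul_comm]
  have e6 : (z ^ 2) ^ N = (z ^ N) ^ 2 := by rw [← pow_mul, ← pow_mul, mul_comm]
  have e7 : z ^ (2 * N) = (z ^ N) ^ 2 := by rw [← pow_mul, mul_comm]
  rw [e4, e5, e6, e7, Nat.cast_sub hjN]
  rw [hA', hB']
  simp only [AA, BB, zpow_neg, zpow_natCast, id, pow_zero]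
  push_cast
  generalize UU g m (z ^ N) = U
  generalize UU g m (z ^ N)⁻¹ = V
  have hw3 : 1 - (z ^ N) ^ 2 ≠ 0 := by
    intro h; apply hw2; linear_combination -h
  generalize z ^ N = w at *
  generalize z ^ j = y at *
  have : 1 - w ^ 2 = -(w ^ 2 - 1) := by ring
  rw [this]
  field_simp
  ring
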